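/- Assume N ≥ 2, 0 < α < N and p > (N+α)/N, and let {u_n} ⊂ E_λ be a (PS)_c sequence for J_λ. Then: (i) {u_n} is bounded in E_λ, i.e. sup_n ‖u_n‖_{E_λ} < ∞; (ii) lim_{n→∞} ‖u_n‖²_{E_λ} = 2pc/(p−1); and (iii) there exists c₀ > 0, depending only on N, α, p and the growth and kernel constants (in particular not on λ), such that either c = 0 or c ≥ c₀. -/

import Mathlib

open scoped BigOperators ENNReal
open Filter

noncomputable section

namespace Choquard

variable {G : Type*}

/-- The word metric on a group with generating set `S`. -/
def wordDist [Group G] (S : Finset G) (x y : G) : ℕ :=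
  sInf {k : ℕ | ∃ l : List G, (∀ g ∈ l, g ∈ S) ∧ l.length = k ∧ x⁻¹ * y = l.prod}

/-- The closed ball of radius `r` about `c` in the word metric. -/
def ball [Group G] (S : Finset G) (c : G) (r : ℝ) : Set G :=
  {x | (wordDist S x c : ℝ) ≤ r}

/-- Polynomial growth of homogeneous dimension `N`. -/
def PolyGrowth [Group G] (S : Finset G) (N : ℕ) : Prop :=
  ∃ C₁ C₂ : ℝ, 0 < C₁ ∧ 0 < C₂ ∧ ∀ r : ℝ, 1 ≤ r →
    C₁ * r ^ N ≤ ((ball S (1 : G) r).ncard : ℝ) ∧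
    ((ball S (1 : G) r).ncard : ℝ) ≤ C₂ * r ^ N

/-- Riesz-type asymptotics for the kernel `R`. -/
def RieszKernel [Group G] (S : Finset G) (N : ℕ) (α : ℝ) (R : G → G → ℝ) : Prop :=
  (∀ x y, 0 < R x y) ∧
  ∃ c₁ c₂ : ℝ, 0 < c₁ ∧ 0 < c₂ ∧ ∀ x y : G, x ≠ y →
    c₁ * (wordDist S x y : ℝ) ^ (α - (N : ℝ)) ≤ R x y ∧
    R x y ≤ c₂ * (wordDist S x y : ℝ) ^ (α - (N : ℝ))

/-- Convolution `(R ∗ f)(x) = Σ_{y ≠ x} R x y f y`. -/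
def conv [DecidableEq G] (R : G → G → ℝ) (f : G → ℝ) (x : G) : ℝ :=
  ∑' y, if y = x then 0 else R x y * f y

/-- The convolution as an extended-nonnegative-real valued sum. -/
def convE [DecidableEq G] (R : G → G → ℝ) (f : G → ℝ) (x : G) : ℝ≥0∞ :=
  ∑' y, if y = x then 0 else ENNReal.ofReal (R x y * f y)

/-- Membership in `ℓ^q(G)`. -/
def Memlp (q : ℝ) (u : G → ℝ) : Prop := Summable fun x => |u x| ^ q

/-- The `ℓ^q` norm. -/
def lpNorm (q : ℝ) (u : G → ℝ) : ℝ := (∑' x, |u x| ^ q) ^ (1 / q)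

/-- The `ℓ^∞` norm. -/
def supNorm (u : G → ℝ) : ℝ := ⨆ x, |u x|

/-- The graph Laplacian `Δu(x) = Σ_{s ∈ S} (u(xs) - u(x))`. -/
def lap [Group G] (S : Finset G) (u : G → ℝ) (x : G) : ℝ :=
  ∑ s ∈ S, (u (x * s) - u x)

/-- The gradient form `∇u∇v(x) = (1/2) Σ_{s ∈ S} (u(xs)-u(x))(v(xs)-v(x))`. -/
def grad [Group G] (S : Finset G) (u v : G → ℝ) (x : G) : ℝ :=
  (1 / 2) * ∑ s ∈ S, (u (x * s) - u x) * (v (x * s) - v x)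

/-- The density `|Δu|² + |∇u|² + (1 + λa)u²`. -/
def eDensity [Group G] (S : Finset G) (a : G → ℝ) (lam : ℝ) (u : G → ℝ) (x : G) : ℝ :=
  (lap S u x) ^ 2 + grad S u u x + (1 + lam * a x) * (u x) ^ 2

/-- Membership in the space `E_λ`. -/
def MemE [Group G] (S : Finset G) (a : G → ℝ) (lam : ℝ) (u : G → ℝ) : Prop :=
  Summable (eDensity S a lam u)

/-- `‖u‖²_{E_λ}`. -/
def normEsq [Group G] (S : Finset G) (a : G → ℝ) (lam : ℝ) (u : G → ℝ) : ℝ :=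
  ∑' x, eDensity S a lam u x

/-- `‖u‖_{E_λ}`. -/
def normE [Group G] (S : Finset G) (a : G → ℝ) (lam : ℝ) (u : G → ℝ) : ℝ :=
  Real.sqrt (normEsq S a lam u)

/-- The inner product `⟨u, v⟩_{E_λ}`. -/
def innerE [Group G] (S : Finset G) (a : G → ℝ) (lam : ℝ) (u v : G → ℝ) : ℝ :=
  ∑' x, (lap S u x * lap S v x + grad S u v x + (1 + lam * a x) * (u x * v x))

/-- The nonlocal term `Σ_G (R_α ∗ |u|^p)|u|^p`. -/
def Dterm [DecidableEq G] (R : G → G → ℝ) (p : ℝ) (u : G → ℝ) : ℝ :=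
  ∑' x, conv R (fun y => |u y| ^ p) x * |u x| ^ p

/-- The nonlocal pairing `Σ_G (R_α ∗ |u|^p)|u|^{p-2} u v`. -/
def Kterm [DecidableEq G] (R : G → G → ℝ) (p : ℝ) (u v : G → ℝ) : ℝ :=
  ∑' x, conv R (fun y => |u y| ^ p) x * (|u x| ^ (p - 2) * u x * v x)

/-- The energy functional `J_λ`. -/
def Jfun [Group G] [DecidableEq G] (S : Finset G) (a : G → ℝ) (lam : ℝ)
    (R : G → G → ℝ) (p : ℝ) (u : G → ℝ) : ℝ :=
  (1 / 2) * normEsq S a lam u - (1 / (2 * p)) * Dterm R p u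

/-- The derivative pairing `(J'_λ(u), v)`. -/
def Jd [Group G] [DecidableEq G] (S : Finset G) (a : G → ℝ) (lam : ℝ)
    (R : G → G → ℝ) (p : ℝ) (u v : G → ℝ) : ℝ :=
  innerE S a lam u v - Kterm R p u v

/-- The Nehari manifold `N_λ`. -/
def nehari [Group G] [DecidableEq G] (S : Finset G) (a : G → ℝ) (lam : ℝ)
    (R : G → G → ℝ) (p : ℝ) : Set (G → ℝ) :=
  {u | MemE S a lam u ∧ u ≠ 0 ∧ Jd S a lam R p u u = 0}

/-- `m_λ = inf_{N_λ} J_λ`. -/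
def mlam [Group G] [DecidableEq G] (S : Finset G) (a : G → ℝ) (lam : ℝ)
    (R : G → G → ℝ) (p : ℝ) : ℝ :=
  sInf (Jfun S a lam R p '' nehari S a lam R p)

/-- The norm of `J'_λ(u)` in the dual space `E_λ*`. -/
def dualNorm [Group G] [DecidableEq G] (S : Finset G) (a : G → ℝ) (lam : ℝ)
    (R : G → G → ℝ) (p : ℝ) (u : G → ℝ) : ℝ :=
  sSup {t : ℝ | ∃ v, MemE S a lam v ∧ normEsq S a lam v ≤ 1 ∧ t = |Jd S a lam R p u v|}

/-- `(PS)_c` sequence for `J_λ`. -/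
def PSseq [Group G] [DecidableEq G] (S : Finset G) (a : G → ℝ) (lam : ℝ)
    (R : G → G → ℝ) (p : ℝ) (c : ℝ) (U : ℕ → G → ℝ) : Prop :=
  (∀ n, MemE S a lam (U n)) ∧
  Tendsto (fun n => Jfun S a lam R p (U n)) atTop (nhds c) ∧
  Tendsto (fun n => dualNorm S a lam R p (U n)) atTop (nhds 0)

/-- The Cayley graph of `(G, S)`. -/
def cayley [Group G] (S : Finset G) : SimpleGraph G :=
  SimpleGraph.fromRel (fun x y => x⁻¹ * y ∈ S)

/-- Condition (A₁): the potential well `Ω = {a = 0}` is nonempty, finite and connected. -/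
def CondA1 [Group G] (S : Finset G) (a : G → ℝ) : Prop :=
  {x | a x = 0}.Nonempty ∧ {x | a x = 0}.Finite ∧
  ((cayley S).induce {x | a x = 0}).Connected

/-- Condition (A₂): some sublevel set `{a ≤ M}` is finite and nonempty. -/
def CondA2 (a : G → ℝ) : Prop :=
  ∃ M : ℝ, 0 < M ∧ {x | a x ≤ M}.Finite ∧ {x | a x ≤ M}.Nonempty

/-- The density `|Δu|² + |∇u|² + u²` of the `W^{2,2}` norm. -/
def wDensity [Group G] (S : Finset G) (u : G → ℝ) (x : G) : ℝ :=
  (lap S u x) ^ 2 + grad S u u x + (u x) ^ 2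

/-- Membership in `W^{2,2}(G)`. -/
def MemW [Group G] (S : Finset G) (u : G → ℝ) : Prop := Summable (wDensity S u)

/-- `‖u‖²_{W^{2,2}}`. -/
def normWsq [Group G] (S : Finset G) (u : G → ℝ) : ℝ := ∑' x, wDensity S u x

/-- Membership in `E(Ω)`: vanishing outside `Ω`. -/
def MemEOm (Ω : Set G) (u : G → ℝ) : Prop := ∀ x ∉ Ω, u x = 0

/-- `‖u‖²_{E(Ω)}`. -/
def normOmSq [Group G] (S : Finset G) (Ω : Set G) (u : G → ℝ) : ℝ :=
  (∑' x, ((lap S u x) ^ 2 + grad S u u x)) + ∑' x : Ω, (u (x : G)) ^ 2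

/-- The nonlocal term over `Ω`. -/
def DtermOm [DecidableEq G] (Ω : Set G) (R : G → G → ℝ) (p : ℝ) (u : G → ℝ) : ℝ :=
  ∑' x : Ω, conv R (fun y => |u y| ^ p) (x : G) * |u (x : G)| ^ p

/-- The limiting energy functional `J_Ω`. -/
def JOm [Group G] [DecidableEq G] (S : Finset G) (Ω : Set G) (R : G → G → ℝ) (p : ℝ)
    (u : G → ℝ) : ℝ :=
  (1 / 2) * normOmSq S Ω u - (1 / (2 * p)) * DtermOm Ω R p u

/-- The derivative pairing `(J'_Ω(u), v)`. -/
def JdOm [Group G] [DecidableEq G] (S : Finset G) (Ω : Set G) (R : G → G → ℝ) (p : ℝ)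
    (u v : G → ℝ) : ℝ :=
  (∑' x, (lap S u x * lap S v x + grad S u v x)) + (∑' x : Ω, u (x : G) * v (x : G))
    - ∑' x : Ω, conv R (fun y => |u y| ^ p) (x : G) * (|u (x : G)| ^ (p - 2) * u (x : G) * v (x : G))

/-- The Nehari manifold `N_Ω`. -/
def nehariOm [Group G] [DecidableEq G] (S : Finset G) (Ω : Set G) (R : G → G → ℝ)
    (p : ℝ) : Set (G → ℝ) :=
  {u | MemEOm Ω u ∧ u ≠ 0 ∧ JdOm S Ω R p u u = 0}

/-- `m_Ω = inf_{N_Ω} J_Ω`. -/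
def mOm [Group G] [DecidableEq G] (S : Finset G) (Ω : Set G) (R : G → G → ℝ) (p : ℝ) : ℝ :=
  sInf (JOm S Ω R p '' nehariOm S Ω R p)

/-- Summability of `d(g,1)^{-β}` for `β > N`. -/
lemma kernel_summable {G : Type*} [Group G] (S : Finset G) (N : ℕ) (hg : PolyGrowth S N)
    (β : ℝ) (hβ : (N : ℝ) < β) :
    ∑' g : G, ENNReal.ofReal ((wordDist S g 1 : ℝ) ^ (-β)) ≠ ⊤ := by
  obtain ⟨C₁, C₂, hC1, hC2, hb⟩ := hg
  have hβ0 : 0 < β := lt_of_le_of_lt (Nat.cast_nonneg N) hβ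
  have hfin : ∀ n : ℕ, (ball S (1 : G) ((2 : ℝ) ^ n)).Finite := by
    intro n
    have h1 : (1 : ℝ) ≤ 2 ^ n := one_le_pow₀ (by norm_num)
    have h2 := (hb _ h1).1
    apply Set.finite_of_ncard_pos
    have : (0 : ℝ) < ((ball S (1 : G) ((2 : ℝ) ^ n)).ncard : ℝ) := lt_of_lt_of_le (by positivity) h2
    exact_mod_cast this
  have hpt : ∀ g : G, ENNReal.ofReal ((wordDist S g 1 : ℝ) ^ (-β)) ≤
      ∑' n : ℕ, (ball S (1 : G) ((2 : ℝ) ^ n)).indicator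
        (fun _ => ENNReal.ofReal (2 ^ β * ((2 : ℝ) ^ n) ^ (-β))) g := by
    intro g
    rcases Nat.eq_zero_or_pos (wordDist S g 1) with h0 | h0
    · rw [h0]
      simp [Real.zero_rpow (by linarith : -β ≠ 0)]
    · refine le_trans ?_ (ENNReal.le_tsum (Nat.log 2 (wordDist S g 1) + 1))
      have hlt := Nat.lt_pow_succ_log_self (b := 2) (by norm_num) (wordDist S g 1)
      have hle := Nat.pow_log_le_self 2 (x := wordDist S g 1) (by omega)
      have hlt' : (wordDist S g 1 : ℝ) ≤ (2 : ℝ) ^ (Nat.log 2 (wordDist S g 1) + 1) := by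
        exact_mod_cast hlt.le
      have hle' : (2 : ℝ) ^ (Nat.log 2 (wordDist S g 1)) ≤ (wordDist S g 1 : ℝ) := by
        exact_mod_cast hle
      rw [Set.indicator_of_mem (by exact hlt')]
      apply ENNReal.ofReal_le_ofReal
      rw [pow_succ, Real.mul_rpow (by positivity) (by norm_num), Real.rpow_neg (by norm_num : (0:ℝ) ≤ 2) β]
      have h2 : (0 : ℝ) < 2 ^ β := by positivity
      have : (2 : ℝ) ^ β * (((2 : ℝ) ^ Nat.log 2 (wordDist S g 1)) ^ (-β) * (2 ^ β)⁻¹) =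
        ((2 : ℝ) ^ Nat.log 2 (wordDist S g 1)) ^ (-β) := by field_simp
      rw [this]
      exact Real.rpow_le_rpow_of_nonpos (by positivity) hle' (by linarith)
  refine ne_top_of_le_ne_top ?_ (ENNReal.tsum_le_tsum hpt)
  rw [ENNReal.tsum_comm]
  have hn : ∀ n : ℕ, ∑' g : G, (ball S (1 : G) ((2 : ℝ) ^ n)).indicator
        (fun _ => ENNReal.ofReal (2 ^ β * ((2 : ℝ) ^ n) ^ (-β))) g ≤
        ENNReal.ofReal (C₂ * 2 ^ β * ((2 : ℝ) ^ ((N : ℝ) - β)) ^ n) := by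
    intro n
    have h1 : (1 : ℝ) ≤ 2 ^ n := one_le_pow₀ (by norm_num)
    rw [← tsum_subtype, ENNReal.tsum_const]
    have hc : ENat.card (ball S (1 : G) ((2 : ℝ) ^ n)) = ((ball S (1 : G) ((2 : ℝ) ^ n)).ncard : ℕ∞) := by
      rw [(hfin n).cast_ncard_eq]; rfl
    rw [hc]
    have : (((ball S (1 : G) ((2 : ℝ) ^ n)).ncard : ℕ∞) : ℝ≥0∞) =
      ENNReal.ofReal ((ball S (1 : G) ((2 : ℝ) ^ n)).ncard : ℝ) := by simp
    rw [this, ← ENNReal.ofReal_mul (by positivity)]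
    apply ENNReal.ofReal_le_ofReal
    refine (mul_le_mul_of_nonneg_right (hb _ h1).2 (by positivity)).trans (le_of_eq ?_)
    have e1 : ((2 : ℝ) ^ n) ^ (-β) = (2 ^ (-β)) ^ n := by
      rw [← Real.rpow_natCast, ← Real.rpow_natCast, ← Real.rpow_mul (by norm_num),
        ← Real.rpow_mul (by norm_num), mul_comm]
    rw [e1, sub_eq_add_neg, Real.rpow_add (by norm_num), Real.rpow_natCast, mul_pow, ← pow_mul,
      ← pow_mul, mul_comm n N]
    ring
  refine ne_top_of_le_ne_top ?_ (ENNReal.tsum_le_tsum hn)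
  have hlt : (2 : ℝ) ^ ((N : ℝ) - β) < 1 := Real.rpow_lt_one_of_one_lt_of_neg (by norm_num) (by linarith)
  exact ((summable_geometric_of_lt_one (by positivity) hlt).mul_left (C₂ * 2 ^ β)).tsum_ofReal_ne_top

/-- Pointwise Young-type inequality for the kernel. -/
lemma kernel_pointwise {G : Type*} [Group G] (S : Finset G)
    (N : ℕ) (hN : 2 ≤ N) (hgrowth : PolyGrowth S N)
    (α : ℝ) (hα0 : 0 < α) (hαN : α < (N : ℝ))
    (R : G → G → ℝ) (hR : RieszKernel S N α R)
    (p : ℝ) (hp : ((N : ℝ) + α) / (N : ℝ) < p) :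
    ∃ (A : ℝ) (h : G → ℝ), 0 ≤ A ∧ (∀ g, 0 ≤ h g) ∧ ∑' g, ENNReal.ofReal (h g) ≠ ⊤ ∧
      ∀ x y, x ≠ y → ∀ s t : ℝ, 0 ≤ s → s ≤ 1 → 0 ≤ t → t ≤ 1 →
        R x y * t ^ p * s ^ p ≤ A * (s ^ 2 * t ^ 2) + h (y⁻¹ * x) * (s ^ 2 + t ^ 2) := by
  obtain ⟨hpos, c₁, c₂, hc1, hc2, hb⟩ := hR
  have hd : ∀ x y, wordDist S x y = wordDist S (y⁻¹ * x) 1 := by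
    intro x y; simp [wordDist]
  have hNpos : (0 : ℝ) < N := by positivity
  have hd1 : ∀ x y : G, x ≠ y → (1 : ℝ) ≤ wordDist S x y := by
    intro x y hxy
    rcases Nat.eq_zero_or_pos (wordDist S x y) with h0 | h0
    · exfalso
      have := (hb x y hxy).2
      rw [h0, Nat.cast_zero, Real.zero_rpow (by linarith)] at this
      linarith [hpos x y]
    · exact_mod_cast h0
  have hp1 : 1 + α / N < p := by
    have : ((N : ℝ) + α) / (N : ℝ) = 1 + α / N := by field_simp
    linarith
  have hαN' : 0 < α / N := by positivity
  rcases le_or_gt 2 p with h2 | h2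
  · refine ⟨c₂, fun _ => 0, hc2.le, fun _ => le_rfl, by simp, ?_⟩
    intro x y hxy s t hs hs1 ht ht1
    have hR1 : R x y ≤ c₂ := by
      refine (hb x y hxy).2.trans ?_
      have := Real.rpow_le_one_of_one_le_of_nonpos (hd1 x y hxy) (by linarith : α - (N : ℝ) ≤ 0)
      nlinarith
    have key : ∀ r : ℝ, 0 ≤ r → r ≤ 1 → r ^ p ≤ r ^ 2 := by
      intro r hr hr1
      rcases hr.eq_or_lt with h | h
      · rw [← h, Real.zero_rpow (by linarith)]; norm_num
      · rw [← Real.rpow_natCast]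
        exact Real.rpow_le_rpow_of_exponent_ge h hr1 (by exact_mod_cast h2)
    have k1 := key s hs hs1
    have k2 := key t ht ht1
    calc R x y * t ^ p * s ^ p ≤ c₂ * t ^ 2 * s ^ 2 := by gcongr
      _ = _ := by ring
  · set q : ℝ := 1 / (2 - p) with hq
    have hqpos : 0 < q := by rw [hq]; apply one_div_pos.mpr; linarith
    have hβ : (N : ℝ) < ((N : ℝ) - α) * q := by
      rw [hq, mul_one_div, lt_div_iff₀ (by linarith)]
      have : α / N * N = α := by field_simp
      nlinarith
    refine ⟨p - 1, fun g => c₂ ^ q * (wordDist S g 1 : ℝ) ^ (-(((N : ℝ) - α) * q)), by linarith,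
      fun g => by positivity, ?_, ?_⟩
    · have := kernel_summable S N hgrowth _ hβ
      simp_rw [ENNReal.ofReal_mul (by positivity : 0 ≤ c₂ ^ q)]
      rw [ENNReal.tsum_mul_left]
      exact ENNReal.mul_ne_top ENNReal.ofReal_ne_top this
    · intro x y hxy s t hs hs1 ht ht1
      have hRp := hpos x y
      have hRq : R x y ^ q ≤ c₂ ^ q * (wordDist S (y⁻¹ * x) 1 : ℝ) ^ (-(((N : ℝ) - α) * q)) := by
        have := Real.rpow_le_rpow hRp.le (hb x y hxy).2 hqpos.le
        rw [Real.mul_rpow hc2.le (by positivity), ← Real.rpow_mul (by positivity), hd x y] at this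
        refine this.trans (le_of_eq ?_)
        congr 2; ring
      have amgm := Real.geom_mean_le_arith_mean2_weighted (w₁ := p - 1) (w₂ := 2 - p)
        (p₁ := (s * t) ^ 2) (p₂ := s * t * R x y ^ q) (by linarith) (by linarith)
        (by positivity) (by positivity) (by ring)
      have e : ((s * t) ^ 2) ^ (p - 1) * (s * t * R x y ^ q) ^ (2 - p) = R x y * t ^ p * s ^ p := by
        have hst : 0 ≤ s * t := by positivity
        rw [Real.mul_rpow hst (by positivity), ← Real.rpow_mul hRp.le,
          show q * (2 - p) = 1 by rw [hq]; field_simp [(by linarith : 2 - p ≠ 0)], Real.rpow_one,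
          ← Real.rpow_natCast, ← Real.rpow_mul hst]
        have : (s * t) ^ (((2 : ℕ) : ℝ) * (p - 1)) * (s * t) ^ (2 - p) = (s * t) ^ p := by
          rw [← Real.rpow_add_of_nonneg hst (by push_cast; linarith) (by linarith)]
          congr 1; push_cast; ring
        rw [← mul_assoc, this, Real.mul_rpow hs ht]; ring
      rw [e] at amgm
      refine amgm.trans ?_
      have hq0 : 0 ≤ R x y ^ q := by positivity
      have h3 : (2 - p) * (s * t * R x y ^ q) ≤ R x y ^ q * (s ^ 2 + t ^ 2) := by
        have : (2 - p) * (s * t) ≤ s ^ 2 + t ^ 2 := by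
          have : 0 ≤ s * t := by positivity
          nlinarith [sq_nonneg (s - t)]
        nlinarith
      have h4 : R x y ^ q * (s ^ 2 + t ^ 2) ≤
        c₂ ^ q * (wordDist S (y⁻¹ * x) 1 : ℝ) ^ (-(((N : ℝ) - α) * q)) * (s ^ 2 + t ^ 2) := by
        gcongr
      have : (s * t) ^ 2 = s ^ 2 * t ^ 2 := by ring
      rw [this]
      linarith

/-- The Hardy-Littlewood-Sobolev-type bound for the double sum. -/
lemma double_bound {G : Type*} [Group G] [DecidableEq G] (S : Finset G)
    (N : ℕ) (hN : 2 ≤ N) (hgrowth : PolyGrowth S N)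
    (α : ℝ) (hα0 : 0 < α) (hαN : α < (N : ℝ))
    (R : G → G → ℝ) (hR : RieszKernel S N α R)
    (p : ℝ) (hp : ((N : ℝ) + α) / (N : ℝ) < p) (hp0 : 0 < p) :
    ∃ C : ℝ, 0 < C ∧ ∀ w : G → ℝ, (∀ x, 0 ≤ w x) → Summable (fun x => w x ^ 2) →
      ∑' x, ∑' y, (if y = x then 0 else ENNReal.ofReal (R x y * w y ^ p * w x ^ p)) ≤
        ENNReal.ofReal (C * (∑' x, w x ^ 2) ^ p) := by
  obtain ⟨A, h, hA, hh, hsum, hpt⟩ := kernel_pointwise S N hN hgrowth α hα0 hαN R hR p hp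
  set H := ∑' g, ENNReal.ofReal (h g) with hH
  refine ⟨A + 2 * H.toReal + 1, by positivity, ?_⟩
  intro w hw hws
  set T := ∑' x, w x ^ 2 with hT
  have hT0 : 0 ≤ T := tsum_nonneg fun x => by positivity
  have hle : ∀ x, w x ^ 2 ≤ T := fun x => hws.le_tsum x (fun _ _ => by positivity)
  rcases hT0.eq_or_lt with h0 | hTpos
  · have : ∀ x, w x = 0 := by
      intro x
      have := hle x
      rw [← h0] at this
      exact pow_eq_zero_iff (two_ne_zero) |>.1 (le_antisymm this (by positivity))
    simp [this, Real.zero_rpow hp0.ne']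
  · set r := Real.sqrt T with hr
    have hrpos : 0 < r := Real.sqrt_pos.2 hTpos
    have hr2 : r ^ 2 = T := Real.sq_sqrt hT0
    have hv1 : ∀ x, w x / r ≤ 1 := by
      intro x
      rw [div_le_one hrpos]
      exact Real.le_sqrt_of_sq_le (hle x)
    have hv0 : ∀ x, 0 ≤ w x / r := fun x => div_nonneg (hw x) hrpos.le
    have hTp : T ^ p = r ^ p * r ^ p := by
      rw [← hr2, pow_two, Real.mul_rpow hrpos.le hrpos.le]
    have hwp : ∀ x, w x ^ p = r ^ p * (w x / r) ^ p := by
      intro x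
      rw [← Real.mul_rpow hrpos.le (hv0 x)]
      congr 1; field_simp
    set V : G → ℝ≥0∞ := fun x => ENNReal.ofReal ((w x / r) ^ 2) with hV
    set K : G → ℝ≥0∞ := fun g => ENNReal.ofReal (h g) with hK
    have hVsum : ∑' x, V x = 1 := by
      have hs : Summable (fun x => (w x / r) ^ 2) := by
        simp_rw [div_pow]; exact hws.div_const _
      rw [← ENNReal.ofReal_tsum_of_nonneg (fun x => by positivity) hs]
      simp_rw [div_pow]
      rw [tsum_div_const, hr2, ← hT, div_self hTpos.ne', ENNReal.ofReal_one]
    have hterm : ∀ x y, (if y = x then 0 else ENNReal.ofReal (R x y * w y ^ p * w x ^ p)) ≤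
        ENNReal.ofReal (T ^ p) * (ENNReal.ofReal A * (V x * V y) + (K (y⁻¹ * x) * V x + K (y⁻¹ * x) * V y)) := by
      intro x y
      split_ifs with hxy
      · exact zero_le
      · have := hpt x y (Ne.symm hxy) (w x / r) (w y / r) (hv0 x) (hv1 x) (hv0 y) (hv1 y)
        have e : R x y * w y ^ p * w x ^ p = T ^ p * (R x y * (w y / r) ^ p * (w x / r) ^ p) := by
          rw [hwp x, hwp y, hTp]; ring
        rw [e, ENNReal.ofReal_mul (by positivity)]
        refine mul_le_mul_right ((ENNReal.ofReal_le_ofReal this).trans (le_of_eq ?_)) _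
        have hk := hh (y⁻¹ * x)
        rw [ENNReal.ofReal_add (by positivity) (by positivity), ENNReal.ofReal_mul hA,
          ENNReal.ofReal_mul (by positivity), ENNReal.ofReal_mul hk,
          ENNReal.ofReal_add (by positivity) (by positivity), mul_add]
    refine (ENNReal.tsum_le_tsum fun x => ENNReal.tsum_le_tsum fun y => hterm x y).trans ?_
    simp_rw [ENNReal.tsum_mul_left, ENNReal.tsum_add, ENNReal.tsum_mul_left, hVsum, mul_one]
    have s1 : ∑' x, ∑' y, K (y⁻¹ * x) * V x = H := by
      have : ∀ x, ∑' y, K (y⁻¹ * x) * V x = H * V x := by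
        intro x
        rw [ENNReal.tsum_mul_right]
        congr 1
        exact ((Equiv.inv G).trans (Equiv.mulRight x)).tsum_eq K
      simp_rw [this, ENNReal.tsum_mul_left, hVsum, mul_one]
    have s2 : ∑' x, ∑' y, K (y⁻¹ * x) * V y = H := by
      rw [ENNReal.tsum_comm]
      have : ∀ y, ∑' x, K (y⁻¹ * x) * V y = H * V y := by
        intro y
        rw [ENNReal.tsum_mul_right]
        congr 1
        exact (Equiv.mulLeft y⁻¹).tsum_eq K
      simp_rw [this, ENNReal.tsum_mul_left, hVsum, mul_one]
    rw [s1, s2, hVsum, mul_one, mul_comm (A + 2 * H.toReal + 1), ENNReal.ofReal_mul (by positivity)]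
    refine mul_le_mul_right ?_ _
    rw [ENNReal.ofReal_add (by positivity) (by positivity), ENNReal.ofReal_add (by positivity) (by positivity),
      ENNReal.ofReal_mul (by positivity), ENNReal.ofReal_toReal hsum]
    simp only [ENNReal.ofReal_ofNat, two_mul]
    exact le_self_add

lemma pair_bound (p : ℝ) (hp1 : 1 < p) (s t w : ℝ) (hs : |s| ≤ w) (ht : |t| ≤ w) :
    |(|s| ^ (p - 2) * s * t)| ≤ w ^ p := by
  have hw : 0 ≤ w := (abs_nonneg s).trans hs
  rcases eq_or_ne s 0 with h | h
  · rw [h]; simp; positivity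
  · have hs0 : 0 < |s| := abs_pos.2 h
    rw [abs_mul, abs_mul, abs_of_nonneg (by positivity : 0 ≤ |s| ^ (p - 2))]
    have e : |s| ^ (p - 2) * |s| = |s| ^ (p - 1) := by
      rw [← Real.rpow_add_one hs0.ne']; congr 1; ring
    have e2 : w ^ p = w ^ (p - 1) * w := by
      rw [← Real.rpow_add_one (hs0.trans_le hs).ne']; congr 1; ring
    rw [e, e2]
    exact mul_le_mul (Real.rpow_le_rpow (abs_nonneg _) hs (by linarith)) ht (abs_nonneg _) (by positivity)

lemma Kterm_bound {G : Type*} [DecidableEq G] (R : G → G → ℝ) (hR : ∀ x y, 0 < R x y)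
    (p : ℝ) (hp1 : 1 < p) (M : ℝ) (hM : 0 ≤ M) (u v w : G → ℝ)
    (hu : ∀ x, |u x| ≤ w x) (hv : ∀ x, |v x| ≤ w x)
    (hb : ∑' x, ∑' y, (if y = x then 0 else ENNReal.ofReal (R x y * w y ^ p * w x ^ p)) ≤
        ENNReal.ofReal M) : |Kterm R p u v| ≤ M := by
  rw [← Real.norm_eq_abs, ← ENNReal.ofReal_le_ofReal_iff hM, ofReal_norm_eq_enorm]
  refine le_trans ?_ hb
  unfold Kterm
  refine enorm_tsum_le_tsum_enorm.trans (ENNReal.tsum_le_tsum fun x => ?_)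
  rw [enorm_mul]
  have hw : ∀ x, 0 ≤ w x := fun x => (abs_nonneg _).trans (hu x)
  have h1 : ‖|u x| ^ (p - 2) * u x * v x‖ₑ ≤ ENNReal.ofReal (w x ^ p) := by
    rw [← ofReal_norm_eq_enorm]
    exact ENNReal.ofReal_le_ofReal (pair_bound p hp1 _ _ _ (hu x) (hv x))
  have h2 : ‖conv R (fun y => |u y| ^ p) x‖ₑ ≤
      ∑' y, if y = x then 0 else ENNReal.ofReal (R x y * w y ^ p) := by
    unfold conv
    refine enorm_tsum_le_tsum_enorm.trans (ENNReal.tsum_le_tsum fun y => ?_)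
    split_ifs with h
    · simp
    · rw [← ofReal_norm_eq_enorm]
      apply ENNReal.ofReal_le_ofReal
      have := hR x y
      rw [Real.norm_eq_abs, abs_of_nonneg (by positivity)]
      have := Real.rpow_le_rpow (abs_nonneg _) (hu y) (by linarith : 0 ≤ p)
      gcongr
  refine (mul_le_mul' h2 h1).trans ?_
  rw [← ENNReal.tsum_mul_right]
  refine ENNReal.tsum_le_tsum fun y => ?_
  split_ifs with h
  · simp
  · have := hR x y
    have := hw y
    rw [← ENNReal.ofReal_mul (by positivity)]

lemma Kterm_self {G : Type*} [DecidableEq G] (R : G → G → ℝ) (p : ℝ) (hp0 : 0 < p) (u : G → ℝ) :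
    Kterm R p u u = Dterm R p u := by
  unfold Kterm Dterm
  refine tsum_congr fun x => ?_
  congr 1
  rcases eq_or_ne (u x) 0 with h | h
  · simp [h, Real.zero_rpow hp0.ne']
  · have hs0 : 0 < |u x| := abs_pos.2 h
    rw [mul_assoc, ← abs_mul_abs_self (u x), ← mul_assoc, ← Real.rpow_add_one hs0.ne',
      ← Real.rpow_add_one hs0.ne']
    congr 1; ring

lemma innerE_self {G : Type*} [Group G] (S : Finset G) (a : G → ℝ) (lam : ℝ) (u : G → ℝ) :
    innerE S a lam u u = normEsq S a lam u := by
  unfold innerE normEsq eDensity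
  refine tsum_congr fun x => ?_
  ring

lemma Jd_self {G : Type*} [Group G] [DecidableEq G] (S : Finset G) (a : G → ℝ) (lam : ℝ)
    (R : G → G → ℝ) (p : ℝ) (hp0 : 0 < p) (u : G → ℝ) :
    Jd S a lam R p u u = normEsq S a lam u - Dterm R p u := by
  rw [Jd, Kterm_self R p hp0, innerE_self]

lemma Jd_smul {G : Type*} [Group G] [DecidableEq G] (S : Finset G) (a : G → ℝ) (lam : ℝ)
    (R : G → G → ℝ) (p : ℝ) (u v : G → ℝ) (t : ℝ) :
    Jd S a lam R p u (fun x => t * v x) = t * Jd S a lam R p u v := by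
  unfold Jd innerE Kterm
  rw [mul_sub, ← tsum_mul_left, ← tsum_mul_left]
  congr 1
  · refine tsum_congr fun x => ?_
    have e1 : lap S (fun x => t * v x) x = t * lap S v x := by
      simp only [lap, Finset.mul_sum, mul_sub]
    have e2 : grad S u (fun x => t * v x) x = t * grad S u v x := by
      simp only [grad, Finset.mul_sum]
      exact Finset.sum_congr rfl fun s _ => by ring
    rw [e1, e2]; ring
  · refine tsum_congr fun x => ?_
    ring

lemma eDensity_smul {G : Type*} [Group G] (S : Finset G) (a : G → ℝ) (lam : ℝ) (v : G → ℝ) (t : ℝ)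
    (x : G) : eDensity S a lam (fun x => t * v x) x = t ^ 2 * eDensity S a lam v x := by
  have e1 : lap S (fun x => t * v x) x = t * lap S v x := by
    simp only [lap, Finset.mul_sum, mul_sub]
  have e2 : grad S (fun x => t * v x) (fun x => t * v x) x = t ^ 2 * grad S v v x := by
    simp only [grad, Finset.mul_sum]
    exact Finset.sum_congr rfl fun s _ => by ring
  unfold eDensity
  rw [e1, e2]; ring

lemma grad_nonneg {G : Type*} [Group G] (S : Finset G) (u : G → ℝ) (x : G) : 0 ≤ grad S u u x := by
  unfold grad
  have : 0 ≤ ∑ s ∈ S, (u (x * s) - u x) * (u (x * s) - u x) :=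
    Finset.sum_nonneg fun s _ => mul_self_nonneg _
  linarith

lemma sq_le_eDensity {G : Type*} [Group G] (S : Finset G) (a : G → ℝ) (ha : ∀ x, 0 ≤ a x)
    (lam : ℝ) (hl : 0 < lam) (u : G → ℝ) (x : G) : u x ^ 2 ≤ eDensity S a lam u x := by
  unfold eDensity
  have h1 := grad_nonneg S u x
  have h2 : 0 ≤ lam * a x * u x ^ 2 := mul_nonneg (mul_nonneg hl.le (ha x)) (sq_nonneg _)
  nlinarith [sq_nonneg (lap S u x)]

lemma eDensity_nonneg {G : Type*} [Group G] (S : Finset G) (a : G → ℝ) (ha : ∀ x, 0 ≤ a x)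
    (lam : ℝ) (hl : 0 < lam) (u : G → ℝ) (x : G) : 0 ≤ eDensity S a lam u x :=
  (sq_nonneg _).trans (sq_le_eDensity S a ha lam hl u x)

lemma inner_le {G : Type*} [Group G] (S : Finset G) (a : G → ℝ) (ha : ∀ x, 0 ≤ a x)
    (lam : ℝ) (hl : 0 < lam) (u v : G → ℝ) (hu : MemE S a lam u) (hv : MemE S a lam v) :
    |innerE S a lam u v| ≤ normEsq S a lam u + normEsq S a lam v := by
  have hpt : ∀ x, ‖lap S u x * lap S v x + grad S u v x + (1 + lam * a x) * (u x * v x)‖ ≤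
      eDensity S a lam u x + eDensity S a lam v x := by
    intro x
    have hg : |grad S u v x| ≤ grad S u u x + grad S v v x := by
      unfold grad
      rw [abs_mul, abs_of_nonneg (by norm_num : (0:ℝ) ≤ 1 / 2), ← mul_add, ← Finset.sum_add_distrib]
      refine mul_le_mul_of_nonneg_left ((Finset.abs_sum_le_sum_abs _ _).trans
        (Finset.sum_le_sum fun s _ => ?_)) (by norm_num)
      rw [abs_le]
      constructor <;> nlinarith [sq_nonneg ((u (x * s) - u x) - (v (x * s) - v x)),
        sq_nonneg ((u (x * s) - u x) + (v (x * s) - v x))]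
    have hl1 : |lap S u x * lap S v x| ≤ lap S u x ^ 2 + lap S v x ^ 2 := by
      rw [abs_le]
      constructor <;> nlinarith [sq_nonneg (lap S u x - lap S v x), sq_nonneg (lap S u x + lap S v x)]
    have hu1 : |u x * v x| ≤ u x ^ 2 + v x ^ 2 := by
      rw [abs_le]
      constructor <;> nlinarith [sq_nonneg (u x - v x), sq_nonneg (u x + v x)]
    have hc : 0 ≤ 1 + lam * a x := by have := mul_nonneg hl.le (ha x); linarith
    have hm : |(1 + lam * a x) * (u x * v x)| ≤ (1 + lam * a x) * (u x ^ 2 + v x ^ 2) := by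
      rw [abs_mul, abs_of_nonneg hc]
      exact mul_le_mul_of_nonneg_left hu1 hc
    rw [Real.norm_eq_abs]
    refine (abs_add_le _ _).trans ((add_le_add (abs_add_le _ _) le_rfl).trans ?_)
    unfold eDensity
    linarith
  have hs : Summable fun x => eDensity S a lam u x + eDensity S a lam v x := Summable.add hu hv
  have := tsum_of_norm_bounded hs.hasSum hpt
  rw [Real.norm_eq_abs] at this
  refine this.trans (le_of_eq ?_)
  exact Summable.tsum_add hu hv

/-- Everything needed about one element of `E_λ`. -/
lemma main_bounds {G : Type*} [Group G] [DecidableEq G] (S : Finset G)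
    (N : ℕ) (hN : 2 ≤ N) (hgrowth : PolyGrowth S N)
    (α : ℝ) (hα0 : 0 < α) (hαN : α < (N : ℝ))
    (R : G → G → ℝ) (hR : RieszKernel S N α R)
    (p : ℝ) (hp : ((N : ℝ) + α) / (N : ℝ) < p) (hp1 : 1 < p) :
    ∃ C : ℝ, 0 < C ∧ ∀ lam : ℝ, 0 < lam → ∀ a : G → ℝ, (∀ x, 0 ≤ a x) → ∀ u : G → ℝ,
      MemE S a lam u →
        Dterm R p u ≤ C * (normEsq S a lam u) ^ p ∧
        |normEsq S a lam u - Dterm R p u| ≤ dualNorm S a lam R p u * (normE S a lam u + 1) := by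
  have hp0 : 0 < p := by linarith
  obtain ⟨C, hC, hD⟩ := double_bound S N hN hgrowth α hα0 hαN R hR p hp hp0
  refine ⟨C, hC, ?_⟩
  intro lam hl a ha u hu
  have hsq : ∀ v, MemE S a lam v → Summable (fun x => v x ^ 2) := fun v hv =>
    Summable.of_nonneg_of_le (fun x => sq_nonneg _) (sq_le_eDensity S a ha lam hl v) hv
  have hle : ∀ v, MemE S a lam v → ∑' x, v x ^ 2 ≤ normEsq S a lam v := fun v hv =>
    (hsq v hv).tsum_le_tsum (sq_le_eDensity S a ha lam hl v) hv
  have hE0 : 0 ≤ normEsq S a lam u := tsum_nonneg (eDensity_nonneg S a ha lam hl u)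
  constructor
  · rw [← Kterm_self R p hp0]
    have h1 := hD (fun x => |u x|) (fun x => abs_nonneg _) (by simpa using hsq u hu)
    have h2 := Kterm_bound R hR.1 p hp1 _ (by positivity) u u (fun x => |u x|)
      (fun x => le_rfl) (fun x => le_rfl) h1
    refine (le_abs_self _).trans (h2.trans ?_)
    simp only [sq_abs]
    have := Real.rpow_le_rpow (tsum_nonneg fun x => sq_nonneg _) (hle u hu) hp0.le
    gcongr
  · have hbdd : BddAbove {t : ℝ | ∃ v, MemE S a lam v ∧ normEsq S a lam v ≤ 1 ∧
        t = |Jd S a lam R p u v|} := by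
      refine ⟨normEsq S a lam u + 1 + C * (2 * normEsq S a lam u + 2) ^ p, ?_⟩
      rintro t ⟨v, hv, hv1, rfl⟩
      have hs : Summable (fun x => 2 * u x ^ 2 + 2 * v x ^ 2) :=
        ((hsq u hu).mul_left 2).add ((hsq v hv).mul_left 2)
      have hpt : ∀ x, (|u x| + |v x|) ^ 2 ≤ 2 * u x ^ 2 + 2 * v x ^ 2 := by
        intro x
        have := sq_abs (u x)
        have := sq_abs (v x)
        nlinarith [sq_nonneg (|u x| - |v x|)]
      have hws : Summable (fun x => (|u x| + |v x|) ^ 2) :=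
        Summable.of_nonneg_of_le (fun x => sq_nonneg _) hpt hs
      have h1 := hD (fun x => |u x| + |v x|) (fun x => by positivity) hws
      have h2 := Kterm_bound R hR.1 p hp1 _ (by positivity) u v (fun x => |u x| + |v x|)
        (fun x => by simp) (fun x => by simp) h1
      have h3 : ∑' x, (|u x| + |v x|) ^ 2 ≤ 2 * normEsq S a lam u + 2 := by
        refine (hws.tsum_le_tsum hpt hs).trans ?_
        rw [((hsq u hu).mul_left 2).tsum_add ((hsq v hv).mul_left 2), tsum_mul_left, tsum_mul_left]
        linarith [hle u hu, hle v hv]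
      have h4 := Real.rpow_le_rpow (tsum_nonneg fun x => sq_nonneg _) h3 hp0.le
      have h5 := mul_le_mul_of_nonneg_left h4 hC.le
      have h6 := inner_le S a ha lam hl u v hu hv
      unfold Jd
      refine (abs_sub _ _).trans ?_
      linarith
    have hr0 : 0 ≤ normE S a lam u := Real.sqrt_nonneg _
    set s := normE S a lam u + 1 with hs
    have hspos : 0 < s := by linarith
    have hvE : MemE S a lam (fun x => s⁻¹ * u x) := by
      unfold MemE
      rw [show eDensity S a lam (fun x => s⁻¹ * u x) = fun x => s⁻¹ ^ 2 * eDensity S a lam u x from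
        funext fun x => eDensity_smul S a lam u s⁻¹ x]
      exact Summable.mul_left _ hu
    have hv1 : normEsq S a lam (fun x => s⁻¹ * u x) ≤ 1 := by
      unfold normEsq
      simp_rw [eDensity_smul]
      rw [tsum_mul_left]
      change s⁻¹ ^ 2 * normEsq S a lam u ≤ 1
      have : normEsq S a lam u = normE S a lam u ^ 2 := (Real.sq_sqrt hE0).symm
      rw [this, inv_pow, inv_mul_le_iff₀ (by positivity)]
      nlinarith
    have := le_csSup hbdd ⟨_, hvE, hv1, rfl⟩
    rw [Jd_smul, Jd_self S a lam R p hp0, abs_mul, abs_of_pos (inv_pos.2 hspos),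
      inv_mul_le_iff₀ hspos] at this
    rw [mul_comm]
    exact this

/-- Consequences for a Palais-Smale sequence. -/
lemma PS_core {G : Type*} [Group G] [DecidableEq G] (S : Finset G)
    (R : G → G → ℝ) (p : ℝ) (hp1 : 1 < p) (a : G → ℝ) (ha : ∀ x, 0 ≤ a x) (lam : ℝ) (hl : 0 < lam)
    (c : ℝ) (U : ℕ → G → ℝ) (hPS : PSseq S a lam R p c U)
    (hb : ∀ n, |normEsq S a lam (U n) - Dterm R p (U n)| ≤
      dualNorm S a lam R p (U n) * (normE S a lam (U n) + 1)) :
    (∃ C : ℝ, ∀ n, normE S a lam (U n) ≤ C) ∧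
      Tendsto (fun n => normEsq S a lam (U n)) atTop (nhds (2 * p * c / (p - 1))) ∧
      Tendsto (fun n => normEsq S a lam (U n) - Dterm R p (U n)) atTop (nhds 0) := by
  obtain ⟨hE, hJ, hd⟩ := hPS
  have hp0 : 0 < p := by linarith
  have hpm : 0 < p - 1 := by linarith
  have hx0 : ∀ n, 0 ≤ normE S a lam (U n) := fun n => Real.sqrt_nonneg _
  have hxx : ∀ n, normE S a lam (U n) ^ 2 = normEsq S a lam (U n) := fun n =>
    Real.sq_sqrt (tsum_nonneg (eDensity_nonneg S a ha lam hl (U n)))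
  have hid : ∀ n, normEsq S a lam (U n) = (2 * p * Jfun S a lam R p (U n) -
      (normEsq S a lam (U n) - Dterm R p (U n))) / (p - 1) := by
    intro n
    unfold Jfun
    field_simp
    ring
  obtain ⟨A, hA⟩ := hJ.bddAbove_range
  obtain ⟨B, hB⟩ := hd.bddAbove_range
  have hA' : ∀ n, Jfun S a lam R p (U n) ≤ A := fun n => hA ⟨n, rfl⟩
  have hB' : ∀ n, dualNorm S a lam R p (U n) ≤ B := fun n => hB ⟨n, rfl⟩
  have hbound : ∀ n, normE S a lam (U n) ≤ (2 * p * |A| + 2 * |B|) / (p - 1) + 1 := by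
    intro n
    rcases le_or_gt (normE S a lam (U n)) 1 with h1 | h1
    · have : 0 ≤ (2 * p * |A| + 2 * |B|) / (p - 1) := by positivity
      linarith
    · have e1 := hid n
      rw [eq_div_iff hpm.ne', ← hxx n] at e1
      have e2 := (abs_le.1 (hb n)).1
      rw [← hxx n] at e2
      have e3 := hA' n
      have e4 : dualNorm S a lam R p (U n) * (normE S a lam (U n) + 1) ≤
          |B| * (normE S a lam (U n) + 1) :=
        mul_le_mul_of_nonneg_right ((hB' n).trans (le_abs_self B)) (by linarith)
      have e5 : 2 * p * Jfun S a lam R p (U n) ≤ 2 * p * |A| :=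
        mul_le_mul_of_nonneg_left (e3.trans (le_abs_self A)) (by linarith)
      have e6 : normE S a lam (U n) * (normE S a lam (U n) * (p - 1)) ≤
          normE S a lam (U n) * (2 * p * |A| + 2 * |B|) := by
        have : 0 ≤ 2 * p * |A| := by positivity
        nlinarith [abs_nonneg B]
      have e7 := le_of_mul_le_mul_left e6 (by linarith)
      have := (le_div_iff₀ hpm).2 e7
      linarith
  have hsm : Tendsto (fun n => normEsq S a lam (U n) - Dterm R p (U n)) atTop (nhds 0) := by
    set M := (2 * p * |A| + 2 * |B|) / (p - 1) + 1 with hM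
    have h1 : Tendsto (fun n => |dualNorm S a lam R p (U n)| * (M + 1)) atTop (nhds 0) := by
      have := (hd.abs).mul_const (M + 1)
      simpa using this
    refine squeeze_zero_norm (fun n => ?_) h1
    rw [Real.norm_eq_abs]
    refine (hb n).trans ?_
    have := hbound n
    have := hx0 n
    exact mul_le_mul (le_abs_self _) (by linarith) (by linarith) (abs_nonneg _)
  refine ⟨⟨_, hbound⟩, ?_, hsm⟩
  have := ((hJ.const_mul (2 * p)).sub hsm).div_const (p - 1)
  rw [sub_zero] at this
  exact this.congr fun n => (hid n).symm

theorem PS_bounded_and_norm_limit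
    {G : Type*} [Group G] [Countable G] [DecidableEq G]
    (S : Finset G) (hSsymm : ∀ s ∈ S, s⁻¹ ∈ S)
    (hSgen : Subgroup.closure (S : Set G) = ⊤)
    (N : ℕ) (hN : 2 ≤ N) (hgrowth : PolyGrowth S N)
    (α : ℝ) (hα0 : 0 < α) (hαN : α < (N : ℝ))
    (R : G → G → ℝ) (hR : RieszKernel S N α R)
    (p : ℝ) (hp : ((N : ℝ) + α) / (N : ℝ) < p) :
    (∀ lam : ℝ, 0 < lam → ∀ a : G → ℝ, (∀ x, 0 ≤ a x) → ∀ c : ℝ, ∀ U : ℕ → G → ℝ,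
      PSseq S a lam R p c U →
        (∃ C : ℝ, ∀ n, normE S a lam (U n) ≤ C) ∧
        Tendsto (fun n => normEsq S a lam (U n)) atTop (nhds (2 * p * c / (p - 1)))) ∧
    ∃ c₀ : ℝ, 0 < c₀ ∧ ∀ lam : ℝ, 0 < lam → ∀ a : G → ℝ, (∀ x, 0 ≤ a x) →
      ∀ c : ℝ, ∀ U : ℕ → G → ℝ, PSseq S a lam R p c U → c = 0 ∨ c₀ ≤ c := by
  have hNpos : (0 : ℝ) < N := by positivity
  have hp1 : 1 < p := by
    refine lt_trans ?_ hp
    rw [lt_div_iff₀ hNpos]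
    linarith
  have hpm : 0 < p - 1 := by linarith
  obtain ⟨C, hC, hmain⟩ := main_bounds S N hN hgrowth α hα0 hαN R hR p hp hp1
  refine ⟨?_, ?_⟩
  · intro lam hl a ha c U hPS
    have h := PS_core S R p hp1 a ha lam hl c U hPS
      (fun n => (hmain lam hl a ha (U n) (hPS.1 n)).2)
    exact ⟨h.1, h.2.1⟩
  · refine ⟨(p - 1) / (2 * p) * (C⁻¹) ^ (1 / (p - 1)), by positivity, ?_⟩
    intro lam hl a ha c U hPS
    obtain ⟨-, h2, h3⟩ := PS_core S R p hp1 a ha lam hl c U hPS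
      (fun n => (hmain lam hl a ha (U n) (hPS.1 n)).2)
    set X := 2 * p * c / (p - 1) with hX
    have hX0 : 0 ≤ X := ge_of_tendsto' h2 fun n => tsum_nonneg (eDensity_nonneg S a ha lam hl (U n))
    have hineq : X ≤ C * X ^ p := by
      have h4 : Tendsto (fun n => C * (normEsq S a lam (U n)) ^ p +
          (normEsq S a lam (U n) - Dterm R p (U n))) atTop (nhds (C * X ^ p + 0)) :=
        ((h2.rpow_const (Or.inr (by linarith))).const_mul C).add h3
      rw [add_zero] at h4
      refine le_of_tendsto_of_tendsto' h2 h4 fun n => ?_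
      have := (hmain lam hl a ha (U n) (hPS.1 n)).1
      linarith
    have hcX : c = (p - 1) / (2 * p) * X := by
      rw [hX]; field_simp
    rcases hX0.eq_or_lt with h0 | hpos
    · left
      rw [hcX, ← h0, mul_zero]
    · right
      rw [hcX]
      refine mul_le_mul_of_nonneg_left ?_ (by positivity)
      have e : X ^ p = X ^ (p - 1) * X := by
        rw [← Real.rpow_add_one hpos.ne']; congr 1; ring
      rw [e, ← mul_assoc] at hineq
      have h5 : 1 ≤ C * X ^ (p - 1) := by
        by_contra hcon
        have := mul_lt_mul_of_pos_right (not_le.1 hcon) hpos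
        linarith
      have h6 : C⁻¹ ≤ X ^ (p - 1) := (inv_le_iff_one_le_mul₀' hC).2 h5
      have h7 := Real.rpow_le_rpow (by positivity) h6 (by positivity : 0 ≤ 1 / (p - 1))
      rwa [← Real.rpow_mul hpos.le, mul_one_div_cancel hpm.ne', Real.rpow_one] at h7

end Choquard
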